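/- Let n be a positive integer and let F be a field that is an algebraic extension of a prime field, whose characteristic is 0 or an odd rational prime p with gcd(n,p) = 1. Then every derivation of the group algebra F V_{8n} is F-linear, and the F-vector space Der(F V_{8n}) of all derivations of F V_{8n} has dimension 6(n−1) over F if n is even, and dimension 3(2n−1) over F if n is odd. -/

import Mathlib

/-- The relators of the presentation
`V_{8n} = ⟨a, b ∣ a^{2n} = b⁴ = 1, (ba)² = 1, (b⁻¹a)² = 1⟩`,
where `a` is the generator indexed by `0` and `b` the one indexed by `1`.
(The relations `ba = a⁻¹b⁻¹` and `b⁻¹a = a⁻¹b` are equivalent to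
`(ba)² = 1` and `(b⁻¹a)² = 1` respectively.) -/
def V8nRels (n : ℕ) : Set (FreeGroup (Fin 2)) :=
  {(FreeGroup.of 0) ^ (2 * n), (FreeGroup.of 1) ^ 4,
   (FreeGroup.of 1 * FreeGroup.of 0) ^ 2,
   ((FreeGroup.of 1)⁻¹ * FreeGroup.of 0) ^ 2}

/-- The group `V_{8n}` of order `8n`. -/
abbrev V8n (n : ℕ) : Type := PresentedGroup (V8nRels n)

/-- The generator `a` of `V_{8n}`. -/
def aV (n : ℕ) : V8n n := PresentedGroup.of 0

/-- The generator `b` of `V_{8n}`. -/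
def bV (n : ℕ) : V8n n := PresentedGroup.of 1
/-- The `F`-vector space of `F`-derivations of an `F`-algebra `A`,
realized as the `F`-linear endomorphisms of `A` satisfying the Leibniz rule. -/
def fDerivations (F : Type*) [CommSemiring F] (A : Type*) [Ring A] [Algebra F A] :
    Submodule F (A →ₗ[F] A) where
  carrier := {d | ∀ x y : A, d (x * y) = d x * y + x * d y}
  zero_mem' := by intro x y; simp
  add_mem' := by
    intro d e hd he x y
    simp only [LinearMap.add_apply, hd x y, he x y, add_mul, mul_add]
    abel
  smul_mem' := by
    intro c d hd x y
    simp only [LinearMap.smul_apply, hd x y, smul_add, smul_mul_assoc, mul_smul_comm]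

/-!
When `|G|` is invertible in `F`, averaging `d(g)g⁻¹` over `G` shows that every `F`-linear
derivation `d` of `FG` is inner, so `Der(FG) ≅ FG / Z(FG)` has dimension `|G|` minus the number of
conjugacy classes of `G`. An algebraic extension of a prime field is separable over it, so all its
derivations vanish, which makes every derivation of an `F`-algebra `F`-linear.

In a group with an abelian subgroup `A` of index two, the centralizer of `x` is the whole group, `A`
or `(A ∩ Z) ∪ x(A ∩ Z)`, according to the position of `x`; counting commuting pairs therefore
determines the number of conjugacy classes from `|A|` and `|A ∩ Z|`. In `V_{8n}` one takes
`A = ⟨a⟩ × ⟨b²⟩`, a complement of the subgroup generated by the involution `ba`.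
-/

section Linearity

variable (F : Type*) [Field F]

theorem perfectField_bot_subfield : PerfectField (⊥ : Subfield F) := by
  obtain ⟨p, _⟩ := CharP.exists F
  rcases CharP.char_is_prime_or_zero F p with hp | rfl
  · have := Fact.mk hp
    have := Subfield.fintypeBot F p
    infer_instance
  · have := CharP.charP_to_charZero F
    infer_instance

variable {F}

/-- The subfield of constants of a derivation `D` of a field: the elements killed by `D`. -/
def derivationConstants {M : Type*} [AddCommGroup M] [Module F M] (D : Derivation ℤ F M) :
    Subfield F where
  carrier := {a | D a = 0}
  zero_mem' := map_zero D
  one_mem' := D.map_one_eq_zero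
  add_mem' := by simp +contextual
  neg_mem' := by simp
  mul_mem' := by simp +contextual
  inv_mem' := by simp +contextual [Derivation.leibniz_inv]

theorem derivation_eq_zero_of_isSeparable_bot [Algebra.IsSeparable (⊥ : Subfield F) F]
    {M : Type*} [AddCommGroup M] [Module F M] (D : Derivation ℤ F M) : D = 0 := by
  have hconst (a : (⊥ : Subfield F)) : D a = 0 := (bot_le : ⊥ ≤ derivationConstants D) a.2
  let D' : Derivation (⊥ : Subfield F) F M := Derivation.mk'
    { D.toAddMonoidHom with
      map_smul' := fun a b ↦ by simp [Subfield.smul_def, hconst] } D.leibniz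
  have := Algebra.FormallyUnramified.of_isSeparable (⊥ : Subfield F) F
  have := (KaehlerDifferential.linearMapEquivDerivation
    (⊥ : Subfield F) F (M := M)).symm.subsingleton
  ext a
  exact DFunLike.congr_fun (Subsingleton.elim D' 0) a

theorem map_smul_of_leibniz [Algebra.IsSeparable (⊥ : Subfield F) F] {A : Type*} [Ring A]
    [Algebra F A] (d : A →+ A) (hd : ∀ x y, d (x * y) = d x * y + x * d y) (c : F) (x : A) :
    d (c • x) = c • d x := by
  let D : Derivation ℤ F A := Derivation.mk'
    (d.comp (algebraMap F A).toAddMonoidHom).toIntLinearMap fun a b ↦ by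
      simp [hd, Algebra.smul_def, Algebra.commutes b, add_comm]
  have hD : d (algebraMap F A c) = 0 :=
    DFunLike.congr_fun (derivation_eq_zero_of_isSeparable_bot D) c
  rw [Algebra.smul_def, hd, hD, zero_mul, zero_add, Algebra.smul_def]

end Linearity

section InnerDerivations

attribute [local instance] LieRing.ofAssociativeRing

variable (R A : Type*) [CommRing R] [Ring A] [Algebra R A]

theorem range_ad_le_fDerivations :
    LinearMap.range (LieAlgebra.ad R A : A →ₗ[R] Module.End R A) ≤ fDerivations R A := by
  rintro _ ⟨u, rfl⟩ x y
  simp only [LieHom.coe_toLinearMap, LieAlgebra.ad_apply, Ring.lie_def]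
  noncomm_ring

theorem ker_ad_eq_center :
    LinearMap.ker (LieAlgebra.ad R A : A →ₗ[R] Module.End R A) =
      (Subalgebra.center R A).toSubmodule := by
  ext u
  simp [LinearMap.ext_iff, Ring.lie_def, sub_eq_zero, Subalgebra.mem_center_iff, eq_comm]

variable {R} {G : Type*} [Group G]

theorem lie_sum_mul_single_inv [Fintype G] {d : Module.End R (MonoidAlgebra R G)}
    (hd : d ∈ fDerivations R (MonoidAlgebra R G)) (h : G) :
    ⁅∑ g, d (.single g 1) * .single g⁻¹ 1, (.single h 1 : MonoidAlgebra R G)⁆ =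
      (Nat.card G : R) • d (.single h 1) := by
  have hsum : (∑ g, d (.single g 1) * .single g⁻¹ 1) * .single h 1 =
      ∑ g, d (.single (h * g) 1) * .single g⁻¹ (1 : R) := by
    rw [Finset.sum_mul, ← Equiv.sum_comp (Equiv.mulLeft h)]
    simp [mul_assoc, MonoidAlgebra.single_mul_single]
  have hleibniz (g : G) : d (.single (h * g) 1) * .single g⁻¹ (1 : R) =
      d (.single h 1) + .single h 1 * (d (.single g 1) * .single g⁻¹ 1) := by
    have := hd (.single h 1) (.single g 1)
    simp_all [add_mul, mul_assoc, MonoidAlgebra.single_mul_single, ← MonoidAlgebra.one_def]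
  rw [Ring.lie_def, hsum, Finset.sum_congr rfl fun g _ ↦ hleibniz g, Finset.sum_add_distrib,
    ← Finset.mul_sum, add_sub_cancel_right, Finset.sum_const, Finset.card_univ,
    Nat.card_eq_fintype_card, Nat.cast_smul_eq_nsmul]

theorem range_ad_eq_fDerivations [Finite G] (hG : IsUnit (Nat.card G : R)) :
    LinearMap.range (LieAlgebra.ad R (MonoidAlgebra R G) :
      MonoidAlgebra R G →ₗ[R] Module.End R (MonoidAlgebra R G)) =
      fDerivations R (MonoidAlgebra R G) := by
  have := Fintype.ofFinite G
  refine (range_ad_le_fDerivations R _).antisymm fun d hd ↦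
    ⟨(↑hG.unit⁻¹ : R) • ∑ g, d (.single g 1) * .single g⁻¹ 1, ?_⟩
  ext1 h
  ext1
  simp only [LinearMap.comp_apply, MonoidAlgebra.lsingle_apply, LieHom.coe_toLinearMap,
    LieAlgebra.ad_apply, smul_lie, lie_sum_mul_single_inv hd, smul_smul, hG.val_inv_mul, one_smul]

end InnerDerivations

section Center

variable (R G : Type*) [CommSemiring R] [Group G]

theorem mem_center_monoidAlgebra_iff {u : MonoidAlgebra R G} :
    u ∈ Subalgebra.center R (MonoidAlgebra R G) ↔
      ∀ g h : G, IsConj g h → u.coeff g = u.coeff h := by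
  rw [Subalgebra.mem_center_iff]
  constructor
  · rintro hu g _ hgh
    obtain ⟨c, rfl⟩ := isConj_iff.1 hgh
    simpa using congr(($(hu (.single c 1))).coeff (c * g))
  · intro hu x
    induction x using MonoidAlgebra.induction_linear with
    | zero => simp
    | add x y hx hy => rw [add_mul, mul_add, hx, hy]
    | single g r =>
      ext h
      have : IsConj (g⁻¹ * h) (h * g⁻¹) := isConj_iff.2 ⟨g, by group⟩
      simp [hu _ _ this, mul_comm]

/-- Central elements of the group algebra of a finite group, viewed as class functions. -/
noncomputable def centerEquivClassFunctions [Finite G] :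
    Subalgebra.center R (MonoidAlgebra R G) ≃ₗ[R] (ConjClasses G → R) where
  toFun u := Quotient.lift u.1.coeff ((mem_center_monoidAlgebra_iff R G).1 u.2)
  invFun φ := ⟨.ofCoeff (Finsupp.equivFunOnFinite.symm fun g ↦ φ (.mk g)),
    (mem_center_monoidAlgebra_iff R G).2 fun g h hgh ↦
      congrArg φ (ConjClasses.mk_eq_mk_iff_isConj.2 hgh)⟩
  map_add' u v := funext <| Quotient.ind fun _ ↦ rfl
  map_smul' c u := funext <| Quotient.ind fun _ ↦ rfl
  left_inv u := by ext; rfl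
  right_inv φ := funext <| Quotient.ind fun _ ↦ rfl

theorem finrank_center_monoidAlgebra [StrongRankCondition R] [Finite G] :
    Module.finrank R (Subalgebra.center R (MonoidAlgebra R G)) = Nat.card (ConjClasses G) := by
  have : Finite (ConjClasses G) := Quotient.finite _
  have := Fintype.ofFinite (ConjClasses G)
  rw [(centerEquivClassFunctions R G).finrank_eq, Module.finrank_fintype_fun_eq_card,
    Nat.card_eq_fintype_card]

end Center

section

attribute [local instance] LieRing.ofAssociativeRing

theorem finrank_fDerivations_add_card_conjClasses (F : Type*) [Field F] {G : Type*} [Group G]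
    [Finite G] (hG : (Nat.card G : F) ≠ 0) :
    Module.finrank F (fDerivations F (MonoidAlgebra F G)) + Nat.card (ConjClasses G) =
      Nat.card G := by
  have := Fintype.ofFinite G
  have h := LinearMap.finrank_range_add_finrank_ker
    (LieAlgebra.ad F (MonoidAlgebra F G) : MonoidAlgebra F G →ₗ[F] Module.End F (MonoidAlgebra F G))
  rwa [range_ad_eq_fDerivations hG.isUnit, ker_ad_eq_center, Subalgebra.finrank_toSubmodule,
    finrank_center_monoidAlgebra, (MonoidAlgebra.coeffLinearEquiv F).finrank_eq,
    Module.finrank_finsupp_self, ← Nat.card_eq_fintype_card] at h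

end

section IndexTwo

open Subgroup

variable {G : Type*} [Group G]

theorem sum_card_centralizer [Fintype G] :
    ∑ x : G, Nat.card (centralizer {x}) = Nat.card (ConjClasses G) * Nat.card G := by
  rw [← card_comm_eq_card_conjClasses_mul_card,
    Nat.card_congr (Equiv.subtypeProdEquivSigmaSubtype Commute), Nat.card_sigma]
  exact Finset.sum_congr rfl fun x _ ↦ Nat.card_congr <| Equiv.subtypeEquivRight fun y ↦ by
    rw [mem_centralizer_singleton_iff]; exact eq_comm

theorem card_inf_mul_relIndex (H K : Subgroup G) :
    Nat.card (H ⊓ K : Subgroup G) * H.relIndex K = Nat.card K := by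
  rw [← inf_relIndex_right, ← relIndex_bot_left, ← relIndex_bot_left,
    relIndex_mul_relIndex _ _ _ bot_le inf_le_right]

variable {A : Subgroup G} (hA : A.index = 2)
include hA

theorem relIndex_eq_two_of_index_eq_two {K : Subgroup G} (hK : ¬ K ≤ A) : A.relIndex K = 2 := by
  have := normal_of_index_eq_two hA
  exact ((Nat.dvd_prime Nat.prime_two).1 (hA ▸ A.relIndex_dvd_index_of_normal K)).resolve_left
    fun h ↦ hK (relIndex_eq_one.1 h)

variable [IsMulCommutative A]

theorem commute_iff_mem_center_of_index_eq_two {x y : G} (hx : x ∈ A) (hy : y ∉ A) :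
    Commute x y ↔ x ∈ center G := by
  refine ⟨fun h ↦ mem_center_iff.2 fun g ↦ ?_, fun h ↦ (mem_center_iff.1 h y).symm⟩
  by_cases hg : g ∈ A
  · exact setLike_mul_comm hg hx
  · have hgy : g * y⁻¹ ∈ A := by simp [mul_mem_iff_of_index_two hA, hg, hy]
    have : Commute x (g * y⁻¹) := setLike_mul_comm hx hgy
    simpa using (this.mul_right h).symm.eq

theorem centralizer_singleton_eq_of_mem {x : G} (hx : x ∈ A) (hxZ : x ∉ center G) :
    centralizer {x} = A := by
  refine le_antisymm (fun y hy ↦ ?_) fun y hy ↦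
    mem_centralizer_singleton_iff.2 (setLike_mul_comm hy hx)
  by_contra hyA
  have hxy : Commute x y := (mem_centralizer_singleton_iff.1 hy).symm
  exact hxZ ((commute_iff_mem_center_of_index_eq_two hA hx hyA).1 hxy)

theorem card_centralizer_singleton_of_notMem {x : G} (hx : x ∉ A) :
    Nat.card (centralizer {x}) = 2 * Nat.card (A ⊓ center G : Subgroup G) := by
  have hinf : A ⊓ centralizer {x} = A ⊓ center G := by
    ext y
    simp only [mem_inf, and_congr_right_iff, mem_centralizer_singleton_iff]
    exact fun hy ↦ commute_iff_mem_center_of_index_eq_two hA hy hx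
  have hle : ¬ centralizer {x} ≤ A := fun h ↦ hx (h (mem_centralizer_singleton_iff.2 rfl))
  rw [← card_inf_mul_relIndex A, hinf, relIndex_eq_two_of_index_eq_two hA hle, mul_comm]

open Classical in
theorem card_centralizer_singleton (x : G) :
    Nat.card (centralizer {x}) =
      (if x ∈ A then Nat.card A else 2 * Nat.card (A ⊓ center G : Subgroup G)) +
        if x ∈ A ⊓ center G then Nat.card A else 0 := by
  by_cases hx : x ∈ A
  · by_cases hxZ : x ∈ center G
    · have htop : centralizer {x} = ⊤ := centralizer_eq_top_iff_subset.2 (by simpa using hxZ)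
      simp [hx, hxZ, htop, ← A.card_mul_index, hA, mul_two]
    · simp [hx, hxZ, centralizer_singleton_eq_of_mem hA hx hxZ]
  · simp [hx, card_centralizer_singleton_of_notMem hA hx]

theorem two_mul_card_conjClasses_of_index_eq_two [Finite G] :
    2 * Nat.card (ConjClasses G) =
      Nat.card A + 3 * Nat.card (A ⊓ center G : Subgroup G) := by
  classical
  have := Fintype.ofFinite G
  have hG : Nat.card A * 2 = Nat.card G := hA ▸ A.card_mul_index
  have hmem (H : Subgroup G) : (Finset.univ.filter (· ∈ H)).card = Nat.card H := by
    rw [Nat.card_eq_fintype_card, ← Fintype.card_subtype]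
  have hcompl : (Finset.univ.filter (· ∉ A)).card = Nat.card A := by
    have := Finset.card_filter_add_card_filter_not (s := .univ) (· ∈ A)
    rw [hmem, Finset.card_univ, ← Nat.card_eq_fintype_card] at this
    lia
  have hsum := sum_card_centralizer (G := G)
  simp only [card_centralizer_singleton hA, Finset.sum_add_distrib, Finset.sum_ite,
    Finset.sum_const, hmem, hcompl, smul_eq_mul, mul_zero, add_zero, ← hG] at hsum
  refine Nat.eq_of_mul_eq_mul_left (Nat.card_pos (α := A)) ?_
  linarith

end IndexTwo

theorem natCard_conjClasses_congr {G H : Type*} [Group G] [Group H] (e : G ≃* H) :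
    Nat.card (ConjClasses G) = Nat.card (ConjClasses H) :=
  Nat.card_congr
    { toFun := ConjClasses.map e.toMonoidHom
      invFun := ConjClasses.map e.symm.toMonoidHom
      left_inv := Quotient.ind fun g ↦ congrArg ConjClasses.mk (e.symm_apply_apply g)
      right_inv := Quotient.ind fun h ↦ congrArg ConjClasses.mk (e.apply_symm_apply h) }

section SemidirectProduct

variable {N C : Type*} [CommGroup N] [Group C] (φ : C →* MulAut N)

open SemidirectProduct

theorem index_range_inl : (inl : N →* N ⋊[φ] C).range.index = Nat.card C := by
  rw [range_inl_eq_ker_rightHom, Subgroup.index_ker,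
    MonoidHom.range_eq_top.2 rightHom_surjective, Subgroup.card_top]

variable {φ} in
theorem inl_mem_center_iff {x : N} :
    (inl x : N ⋊[φ] C) ∈ Subgroup.center (N ⋊[φ] C) ↔ ∀ c, φ c x = x := by
  refine Subgroup.mem_center_iff.trans ⟨fun h c ↦ ?_, fun h g ↦ ?_⟩
  · simpa using congr($(h (inr c)).left)
  · ext <;> simp [h, mul_comm]

theorem two_mul_card_conjClasses_semidirectProduct [Finite N] (hC : Nat.card C = 2) :
    2 * Nat.card (ConjClasses (N ⋊[φ] C)) =
      Nat.card N + 3 * Nat.card {x : N // ∀ c, φ c x = x} := by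
  have : Finite C := Nat.finite_of_card_ne_zero (by simp [hC])
  have : Finite (N ⋊[φ] C) := .of_equiv _ equivProd.symm
  rw [two_mul_card_conjClasses_of_index_eq_two ((index_range_inl φ).trans hC),
    ← Nat.card_congr (MonoidHom.ofInjective inl_injective).toEquiv, ← Subgroup.map_comap_eq,
    Subgroup.card_map_of_injective inl_injective]
  simp only [Subgroup.mem_comap, inl_mem_center_iff]

end SemidirectProduct

section CyclicHom

open Multiplicative

variable {m : ℕ} {G : Type*} [Group G]

/-- The homomorphism from the cyclic group of order `m` that sends the standard generator to `g`. -/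
def zmodPowersHom (g : G) (hg : g ^ m = 1) : Multiplicative (ZMod m) →* G :=
  AddMonoidHom.toMultiplicativeLeft <|
    ZMod.lift m ⟨zmultiplesHom (Additive G) (.ofMul g), by
      simpa using congrArg Additive.ofMul hg⟩

@[simp]
theorem zmodPowersHom_ofAdd_one (g : G) (hg : g ^ m = 1) :
    zmodPowersHom g hg (ofAdd 1) = g := by
  simpa [zmodPowersHom] using
    congrArg Additive.toMul (ZMod.lift_coe m ⟨zmultiplesHom (Additive G) (.ofMul g), _⟩ 1)

theorem exists_ofAdd_one_zpow_eq (x : Multiplicative (ZMod m)) : ∃ k : ℤ, ofAdd 1 ^ k = x :=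
  (ZMod.intCast_surjective x.toAdd).imp fun k hk ↦ by simp [← ofAdd_zsmul, hk]

theorem zmodHom_ext {f g : Multiplicative (ZMod m) →* G} (h : f (ofAdd 1) = g (ofAdd 1)) :
    f = g := by
  refine MonoidHom.ext fun x ↦ ?_
  obtain ⟨k, rfl⟩ := exists_ofAdd_one_zpow_eq x
  simp [h]

theorem commute_zmodPowersHom {k : ℕ} {g h : G} (hgh : Commute g h) (hg : g ^ m = 1)
    (hh : h ^ k = 1) (x : Multiplicative (ZMod m)) (y : Multiplicative (ZMod k)) :
    Commute (zmodPowersHom g hg x) (zmodPowersHom h hh y) := by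
  obtain ⟨i, rfl⟩ := exists_ofAdd_one_zpow_eq x
  obtain ⟨j, rfl⟩ := exists_ofAdd_one_zpow_eq y
  simpa using hgh.zpow_zpow i j

theorem zmodProdHom_ext {k : ℕ} {f g : Multiplicative (ZMod m) × Multiplicative (ZMod k) →* G}
    (h₁ : f (ofAdd 1, 1) = g (ofAdd 1, 1)) (h₂ : f (1, ofAdd 1) = g (1, ofAdd 1)) : f = g := by
  have hl : f.comp (.inl _ _) = g.comp (.inl _ _) := zmodHom_ext h₁
  have hr : f.comp (.inr _ _) = g.comp (.inr _ _) := zmodHom_ext h₂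
  rw [← MonoidHom.noncommCoprod_unique f, ← MonoidHom.noncommCoprod_unique g]
  simp only [hl, hr]

theorem forall_multiplicative_zmod_two {p : Multiplicative (ZMod 2) → Prop} :
    (∀ c, p c) ↔ p 1 ∧ p (ofAdd 1) :=
  Fin.forall_fin_two

end CyclicHom

namespace V8n

open Multiplicative SemidirectProduct

section Presentation

variable {n : ℕ}

theorem aV_pow : aV n ^ (2 * n) = 1 :=
  PresentedGroup.one_of_mem (rels := V8nRels n) (by simp [V8nRels])

theorem bV_pow_four : bV n ^ 4 = 1 :=
  PresentedGroup.one_of_mem (rels := V8nRels n) (by simp [V8nRels])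

theorem bV_mul_aV_sq : (bV n * aV n) ^ 2 = 1 :=
  PresentedGroup.one_of_mem (rels := V8nRels n) (by simp [V8nRels])

theorem inv_bV_mul_aV_sq : ((bV n)⁻¹ * aV n) ^ 2 = 1 :=
  PresentedGroup.one_of_mem (rels := V8nRels n) (by simp [V8nRels])

theorem bV_sq_sq : (bV n ^ 2) ^ 2 = 1 := by rw [← pow_mul, bV_pow_four]

theorem inv_bV_sq : (bV n ^ 2)⁻¹ = bV n ^ 2 :=
  inv_eq_of_mul_eq_one_left (by rw [← sq, bV_sq_sq])

theorem bV_mul_aV_mul_bV : bV n * aV n * bV n = (aV n)⁻¹ :=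
  eq_inv_of_mul_eq_one_left (by simpa only [sq, mul_assoc] using bV_mul_aV_sq)

theorem inv_bV_mul_aV_mul_inv_bV : (bV n)⁻¹ * aV n * (bV n)⁻¹ = (aV n)⁻¹ :=
  eq_inv_of_mul_eq_one_left (by simpa only [sq, mul_assoc] using inv_bV_mul_aV_sq)

theorem commute_aV_bV_sq : Commute (aV n) (bV n ^ 2) := calc
  aV n * bV n ^ 2 = bV n * ((bV n)⁻¹ * aV n * (bV n)⁻¹) * (bV n * bV n ^ 2) := by
    simp [mul_assoc]
  _ = bV n * (bV n * aV n * bV n) * (bV n * (bV n ^ 2)⁻¹) := by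
    rw [inv_bV_mul_aV_mul_inv_bV, bV_mul_aV_mul_bV, inv_bV_sq]
  _ = bV n ^ 2 * aV n := by simp [sq, mul_assoc]

theorem bV_mul_aV_mul_inv_bV : bV n * aV n * (bV n)⁻¹ = (aV n)⁻¹ * bV n ^ 2 := by
  rw [← bV_mul_aV_mul_bV, ← inv_bV_sq, sq]
  group

end Presentation

section Model

variable (n : ℕ)

/-- The abstract form `C_{2n} × C_2` of the subgroup `⟨a⟩ × ⟨b²⟩` of `V_{8n}`. -/
abbrev AbelianPart : Type := Multiplicative (ZMod (2 * n)) × Multiplicative (ZMod 2)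

/-- Reduction modulo `2` of the exponents of `a`. -/
def parity : Multiplicative (ZMod (2 * n)) →* Multiplicative (ZMod 2) :=
  (ZMod.castHom (dvd_mul_right 2 n) (ZMod 2)).toAddMonoidHom.toMultiplicative

/-- Conjugation by the involution `ba` on `⟨a⟩ × ⟨b²⟩`: it fixes `b²` and sends `a` to
`a⁻¹b²`. -/
def twist : MulAut (AbelianPart n) where
  toFun x := (x.1⁻¹, parity n x.1 * x.2)
  invFun x := (x.1⁻¹, parity n x.1 * x.2)
  left_inv x := by simp
  right_inv x := by simp
  map_mul' x y := by simp [mul_comm, mul_mul_mul_comm]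

theorem twist_sq : twist n ^ 2 = 1 :=
  MulEquiv.ext (twist n).left_inv

/-- The concrete model `(C_{2n} × C_2) ⋊ C_2` of `V_{8n}`, in which `a` is a generator of
`C_{2n}` and `ba` generates the complement `C_2`. -/
abbrev Model : Type :=
  AbelianPart n ⋊[zmodPowersHom (twist n) (twist_sq n)] Multiplicative (ZMod 2)

variable {n}

theorem parity_ofAdd_one : parity n (ofAdd 1) = ofAdd 1 :=
  congrArg ofAdd (map_one (ZMod.castHom (dvd_mul_right 2 n) (ZMod 2)))

theorem twist_apply (x : AbelianPart n) : twist n x = (x.1⁻¹, parity n x.1 * x.2) := rfl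

theorem twist_symm : (twist n).symm = twist n := rfl

/-- The inclusion of `⟨a⟩ × ⟨b²⟩` into `V_{8n}`. -/
def ofAbelianPart : AbelianPart n →* V8n n :=
  (zmodPowersHom (aV n) aV_pow).noncommCoprod (zmodPowersHom (bV n ^ 2) bV_sq_sq)
    (commute_zmodPowersHom commute_aV_bV_sq _ _)

theorem ofAbelianPart_comp_twist :
    ofAbelianPart.comp (twist n).toMonoidHom =
      (MulAut.conj (bV n * aV n)).toMonoidHom.comp ofAbelianPart := by
  apply zmodProdHom_ext
  · simpa [ofAbelianPart, twist_apply, parity_ofAdd_one, mul_assoc] using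
      bV_mul_aV_mul_inv_bV.symm
  · have : Commute (bV n * aV n) (bV n ^ 2) := .mul_left (.self_pow _ _) commute_aV_bV_sq
    simpa [ofAbelianPart, twist_apply, mul_assoc] using this.mul_inv_cancel.symm

/-- The homomorphism from the model to `V_{8n}`, inverse to `V8n.toModel`. -/
def ofModel : Model n →* V8n n :=
  SemidirectProduct.lift ofAbelianPart (zmodPowersHom (bV n * aV n) bV_mul_aV_sq) <|
    forall_multiplicative_zmod_two.2
      ⟨by ext; simp, by simpa using ofAbelianPart_comp_twist⟩

/-- The element of the model corresponding to `a`. -/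
def modelA : Model n := inl (ofAdd 1, 1)

/-- The element of the model corresponding to `b = (ba)a⁻¹`. -/
def modelB : Model n := inr (ofAdd 1) * modelA⁻¹

theorem modelA_pow : modelA ^ (2 * n) = (1 : Model n) := by
  have : (ofAdd 1 : Multiplicative (ZMod (2 * n))) ^ (2 * n) = 1 :=
    congrArg ofAdd (by simp)
  rw [modelA, ← map_pow, Prod.pow_mk, this, one_pow, Prod.mk_one_one, map_one]

theorem modelB_sq : modelB ^ 2 = (inl (1, ofAdd 1) : Model n) := by
  ext <;> simp [sq, modelA, modelB, twist_apply, parity_ofAdd_one, CharTwo.add_self_eq_zero]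

theorem modelB_pow_four : modelB ^ 4 = (1 : Model n) := by
  rw [pow_mul modelB 2 2, modelB_sq, ← map_pow, Prod.pow_mk, one_pow,
    show (ofAdd 1 : Multiplicative (ZMod 2)) ^ 2 = 1 from rfl, Prod.mk_one_one, map_one]

theorem modelB_mul_modelA_sq : (modelB * modelA) ^ 2 = (1 : Model n) := by
  rw [modelB, inv_mul_cancel_right, ← map_pow]
  rfl

theorem inv_modelB_mul_modelA_sq : (modelB⁻¹ * modelA) ^ 2 = (1 : Model n) := by
  ext <;> simp [sq, modelA, modelB, twist_apply, twist_symm, parity_ofAdd_one,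
    CharTwo.add_self_eq_zero]

/-- The homomorphism from `V_{8n}` to the model given by its presentation. -/
def toModel : V8n n →* Model n :=
  PresentedGroup.toGroup (f := ![modelA, modelB]) <| by
    simp [V8nRels, modelA_pow, modelB_pow_four, modelB_mul_modelA_sq, inv_modelB_mul_modelA_sq]

theorem toModel_aV : toModel (aV n) = modelA := PresentedGroup.toGroup.of _

theorem toModel_bV : toModel (bV n) = modelB := PresentedGroup.toGroup.of _

theorem ofModel_modelA : ofModel modelA = aV n := by
  simp [ofModel, modelA, ofAbelianPart]

theorem ofModel_modelB : ofModel modelB = bV n := by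
  simp [modelB, ofModel, modelA, ofAbelianPart]

theorem ofModel_comp_toModel : ofModel.comp toModel = MonoidHom.id (V8n n) :=
  PresentedGroup.ext <| Fin.forall_fin_two.2
    ⟨(congrArg ofModel toModel_aV).trans ofModel_modelA,
      (congrArg ofModel toModel_bV).trans ofModel_modelB⟩

theorem toModel_comp_ofModel : toModel.comp ofModel = MonoidHom.id (Model n) := by
  refine hom_ext (zmodProdHom_ext ?_ ?_) (zmodHom_ext ?_)
  · simp [ofModel, ofAbelianPart, toModel_aV, modelA]
  · simp [ofModel, ofAbelianPart, toModel_bV, modelB_sq]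
  · simp [ofModel, toModel_aV, toModel_bV, modelB]

/-- The group `V_{8n}` is isomorphic to its concrete model. -/
def mulEquivModel : V8n n ≃* Model n :=
  toModel.toMulEquiv ofModel ofModel_comp_toModel toModel_comp_ofModel

end Model

section Counting

variable {n : ℕ}

theorem card_abelianPart : Nat.card (AbelianPart n) = 4 * n := by
  simp only [AbelianPart, Nat.card_prod, Nat.card_congr toAdd, Nat.card_zmod]
  ring

theorem card : Nat.card (V8n n) = 8 * n := by
  rw [Nat.card_congr mulEquivModel.toEquiv, SemidirectProduct.card, card_abelianPart,
    Nat.card_congr toAdd, Nat.card_zmod]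
  ring

theorem inv_eq_self_iff (hn : 0 < n) {x : Multiplicative (ZMod (2 * n))} :
    x⁻¹ = x ↔ x = 1 ∨ x = ofAdd (n : ZMod (2 * n)) := by
  have : NeZero (2 * n) := ⟨by lia⟩
  refine (ZMod.neg_eq_self_iff x.toAdd).trans (or_congr_right ?_)
  rw [mul_right_inj' two_ne_zero]
  refine ⟨fun h ↦ ?_, fun h ↦ ?_⟩
  · simp [← h]
  · rw [h, toAdd_ofAdd, ZMod.val_natCast_of_lt (by lia)]

theorem parity_ofAdd_natCast_eq_one_iff (k : ℕ) :
    parity n (ofAdd (k : ZMod (2 * n))) = 1 ↔ Even k := by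
  rw [← ZMod.natCast_eq_zero_iff_even, ← map_natCast (ZMod.castHom (dvd_mul_right 2 n) (ZMod 2))]
  rfl

theorem card_inv_eq_self_and_parity_eq_one (hn : 0 < n) :
    Nat.card {x : Multiplicative (ZMod (2 * n)) // x⁻¹ = x ∧ parity n x = 1} = Nat.gcd 2 n := by
  have hmem (x : Multiplicative (ZMod (2 * n))) : x⁻¹ = x ∧ parity n x = 1 ↔
      x = 1 ∨ x = ofAdd (n : ZMod (2 * n)) ∧ Even n := by
    have hparity (hx : x = ofAdd (n : ZMod (2 * n))) : parity n x = 1 ↔ Even n :=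
      hx ▸ parity_ofAdd_natCast_eq_one_iff n
    have hone (hx : x = 1) : parity n x = 1 := hx ▸ map_one (parity n)
    rw [inv_eq_self_iff hn]
    tauto
  simp only [hmem]
  rcases n.even_or_odd with he | ho
  · have hne : 1 ≠ ofAdd (n : ZMod (2 * n)) := fun h ↦ by
      have := Nat.le_of_dvd hn ((ZMod.natCast_eq_zero_iff n (2 * n)).1 (ofAdd_eq_one.1 h.symm))
      lia
    simpa only [he, and_true, Nat.gcd_eq_left he.two_dvd] using! Set.ncard_pair hne
  · simp [Nat.not_even_iff_odd.2 ho, ho.coprime_two_left.gcd_eq_one]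

theorem card_fixedPoints_twist (hn : 0 < n) :
    Nat.card {x : AbelianPart n // twist n x = x} = 2 * Nat.gcd 2 n := by
  have hfixed (x : AbelianPart n) : twist n x = x ↔ (x.1⁻¹ = x.1 ∧ parity n x.1 = 1) ∧ True := by
    simp [twist_apply, Prod.ext_iff]
  rw [Nat.card_congr ((Equiv.subtypeEquivRight hfixed).trans
    (Equiv.subtypeProdEquivProd (p := fun x ↦ x⁻¹ = x ∧ parity n x = 1) (q := fun _ ↦ True))),
    Nat.card_prod, card_inv_eq_self_and_parity_eq_one hn]
  simp [mul_comm]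

theorem card_conjClasses (hn : 0 < n) :
    Nat.card (ConjClasses (V8n n)) = 2 * n + 3 * Nat.gcd 2 n := by
  have : NeZero (2 * n) := ⟨by lia⟩
  have hfixed (x : AbelianPart n) :
      (∀ c, zmodPowersHom (twist n) (twist_sq n) c x = x) ↔ twist n x = x := by
    rw [forall_multiplicative_zmod_two]
    simp
  have h := two_mul_card_conjClasses_semidirectProduct (zmodPowersHom (twist n) (twist_sq n))
    (Nat.card_zmod 2)
  simp only [hfixed, card_fixedPoints_twist hn, card_abelianPart] at h
  rw [natCard_conjClasses_congr mulEquivModel]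
  lia

theorem finrank_fDerivations (F : Type*) [Field F] (hF : ((8 * n : ℕ) : F) ≠ 0) :
    Module.finrank F (fDerivations F (MonoidAlgebra F (V8n n))) + 3 * Nat.gcd 2 n = 6 * n := by
  have hn : 0 < n := Nat.pos_of_ne_zero fun h ↦ hF (by simp [h])
  have : Finite (V8n n) := Nat.finite_of_card_ne_zero (by rw [card]; lia)
  have h := finrank_fDerivations_add_card_conjClasses F (G := V8n n) (by rwa [card])
  rw [card, card_conjClasses hn] at h
  lia

end Counting

end V8n

theorem natCast_eight_mul_ne_zero {R : Type*} [AddMonoidWithOne R] {n : ℕ} (hn : 0 < n)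
    (hR : CharZero R ∨ ∃ p : ℕ, p.Prime ∧ Odd p ∧ Nat.gcd n p = 1 ∧ CharP R p) :
    ((8 * n : ℕ) : R) ≠ 0 := by
  rcases hR with _ | ⟨p, hp, hodd, hgcd, _⟩
  · exact Nat.cast_ne_zero.2 (by lia)
  · have h8 : Nat.Coprime (2 ^ 3) p := hodd.coprime_two_left.pow_left 3
    rw [Ne, CharP.cast_eq_zero_iff R p]
    exact hp.coprime_iff_not_dvd.1 (h8.mul_left hgcd).symm

/-- Let `F` be an algebraic extension of a prime field whose
characteristic is `0` or an odd prime `p` with `gcd(n, p) = 1`. Then every derivation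
of `F V_{8n}` is `F`-linear, and the `F`-vector space of all derivations of
`F V_{8n}` (equivalently, of all `F`-linear derivations) has dimension `6(n-1)` over
`F` when `n` is even, and `3(2n-1)` when `n` is odd. -/
theorem dim_derivations_V8n (n : ℕ) (hn : 0 < n) (F : Type*) [Field F]
    (halg : ∀ x : F, IsAlgebraic (⊥ : Subfield F) x)
    (hchar : CharZero F ∨ ∃ p : ℕ, p.Prime ∧ Odd p ∧ Nat.gcd n p = 1 ∧ CharP F p) :
    (∀ d : MonoidAlgebra F (V8n n) → MonoidAlgebra F (V8n n),
      (∀ x y, d (x + y) = d x + d y) →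
      (∀ x y, d (x * y) = d x * y + x * d y) →
      ∀ (c : F) (x : MonoidAlgebra F (V8n n)), d (c • x) = c • d x) ∧
    (Even n →
      Module.finrank F (fDerivations F (MonoidAlgebra F (V8n n))) = 6 * (n - 1)) ∧
    (Odd n →
      Module.finrank F (fDerivations F (MonoidAlgebra F (V8n n))) = 3 * (2 * n - 1)) := by
  have hbot := perfectField_bot_subfield F
  have : Algebra.IsAlgebraic (⊥ : Subfield F) F := ⟨halg⟩
  have hdim := V8n.finrank_fDerivations F (natCast_eight_mul_ne_zero hn hchar)
  refine ⟨fun d hadd hmul ↦ map_smul_of_leibniz (.mk' d hadd) hmul, fun heven ↦ ?_,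
    fun hodd ↦ ?_⟩
  · rw [Nat.gcd_eq_left heven.two_dvd] at hdim
    lia
  · rw [hodd.coprime_two_left.gcd_eq_one] at hdim
    lia
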